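/- Let n ≥ 2 and let A, B ∈ GL_n(ℂ) be such that A B⁻¹ is a pseudo-reflection. Then the subgroup of GL_n(ℂ) generated by A and B acts irreducibly on ℂⁿ (equivalently, there is no ℂ-subspace W of ℂⁿ with 0 < dim W < n satisfying A W ⊆ W and B W ⊆ W) if and only if spec(A) ∩ spec(B) = ∅, i.e. A and B have no common eigenvalue. -/

import Mathlib

/-- `h` is a pseudo-reflection: `rank (h − 1) = 1`. -/
def IsPseudoReflection {n : ℕ} (h : Matrix (Fin n) (Fin n) ℂ) : Prop :=
  (h - 1).rank = 1

/-- `μ ∈ ℂ` is an eigenvalue of the matrix `A`, for the standard action on `ℂⁿ`. -/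
def HasEigen {n : ℕ} (A : Matrix (Fin n) (Fin n) ℂ) (μ : ℂ) : Prop :=
  ∃ v : Fin n → ℂ, v ≠ 0 ∧ A.mulVec v = μ • v

/-!
Put `f = A` and `g = B`, so that `range (f - g)` is a line. If `W` is invariant under both, then
`f - g` maps `W` into that line, so either `f = g` on `W` or the line lies in `W` and `f = g` on
`V ⧸ W`; whichever of `W`, `V ⧸ W` it is, an eigenvalue there is common to `f` and `g`.
Conversely, let `μ` be a common eigenvalue. On `eigenspace g μ` the map `f - g` agrees with `f - μ`,
so it takes values in `range (f - μ)`. By the same dichotomy, either `f = g` on `eigenspace g μ`,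
which is then invariant under both, or `range (f - g) ≤ range (f - μ)`, and then `range (f - μ)` is.
-/

open Module Module.End LinearMap

theorem le_ker_or_range_le_of_isAtom_range {R M N : Type*} [Semiring R] [AddCommMonoid M]
    [AddCommMonoid N] [Module R M] [Module R N] {h : M →ₗ[R] N} (hh : IsAtom (range h))
    {p : Submodule R M} {q : Submodule R N} (hpq : p ≤ q.comap h) : p ≤ ker h ∨ range h ≤ q := by
  rcases hh.le_iff.mp (map_le_range : p.map h ≤ range h) with hbot | hrange
  · exact .inl (le_ker_iff_map.mpr hbot)
  · exact .inr (hrange ▸ Submodule.map_le_iff_le_comap.mpr hpq)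

section Ring

variable {R M : Type*} [Ring R] [AddCommGroup M] [Module R M] {f g : End R M} {p : Submodule R M}

theorem mem_invtSubmodule_iff_of_le_ker_sub (hp : p ≤ ker (f - g)) :
    p ∈ f.invtSubmodule ↔ p ∈ g.invtSubmodule := by
  simp only [mem_invtSubmodule_iff_forall_mem_of_mem]
  refine forall₂_congr fun x hx => ?_
  have hfg : f x = g x := sub_eq_zero.mp (hp hx)
  rw [hfg]

theorem mem_invtSubmodule_iff_of_range_sub_le (hp : range (f - g) ≤ p) :
    p ∈ f.invtSubmodule ↔ p ∈ g.invtSubmodule := by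
  simp only [mem_invtSubmodule_iff_forall_mem_of_mem]
  refine forall₂_congr fun x _ => ?_
  have hfg : f x - g x ∈ p := hp (mem_range_self (f - g) x)
  exact ⟨fun hf => (p.sub_mem_iff_right hf).mp hfg, fun hg => (p.sub_mem_iff_left hg).mp hfg⟩

end Ring

section CommRing

variable {R M : Type*} [CommRing R] [AddCommGroup M] [Module R M]

theorem range_sub_algebraMap_mem_invtSubmodule (f : End R M) (μ : R) :
    range (f - algebraMap R (End R M) μ) ∈ f.invtSubmodule := by
  rintro _ ⟨x, rfl⟩
  exact ⟨f x, by simp⟩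

theorem eigenspace_le_comap_sub_range (f g : End R M) (μ : R) :
    g.eigenspace μ ≤ (range (f - algebraMap R (End R M) μ)).comap (f - g) := fun x hx =>
  ⟨x, by simp [mem_eigenspace_iff.mp hx]⟩

theorem exists_mem_invtSubmodule_of_hasEigenvalue {f g : End R M} (hfg : IsAtom (range (f - g)))
    {μ : R} (hf : range (f - algebraMap R (End R M) μ) ≠ ⊤) (hg : g.HasEigenvalue μ) :
    ∃ W ∈ f.invtSubmodule ⊓ g.invtSubmodule, W ≠ ⊥ ∧ W ≠ ⊤ := by
  rcases le_ker_or_range_le_of_isAtom_range hfg (eigenspace_le_comap_sub_range f g μ) with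
    hker | hrange
  · have hgE := eigenspace_mem_invtSubmodule g μ
    have hfE := (mem_invtSubmodule_iff_of_le_ker_sub hker).mpr hgE
    refine ⟨g.eigenspace μ, ⟨hfE, hgE⟩, hg, fun htop => hfg.ne_bot ?_⟩
    rwa [range_eq_bot, ← ker_eq_top, ← top_le_iff, ← htop]
  · have hfR := range_sub_algebraMap_mem_invtSubmodule f μ
    exact ⟨_, ⟨hfR, (mem_invtSubmodule_iff_of_range_sub_le hrange).mp hfR⟩,
      ne_bot_of_le_ne_bot hfg.ne_bot hrange, hf⟩

end CommRing

section Spectrum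

variable {K V : Type*} [Field K] [AddCommGroup V] [Module K V] [FiniteDimensional K V]
  {f g : End K V} {p : Submodule K V}

theorem range_sub_algebraMap_ne_top_iff_mem_spectrum {μ : K} :
    range (f - algebraMap K (End K V) μ) ≠ ⊤ ↔ μ ∈ spectrum K f := by
  rw [spectrum.mem_iff, IsUnit.sub_iff, isUnit_iff_range_eq_top]

theorem spectrum_restrict_subset (hp : ∀ x ∈ p, f x ∈ p) :
    spectrum K (f.restrict hp) ⊆ spectrum K f := fun μ hμ => by
  obtain ⟨x, hx⟩ := (HasEigenvalue.of_mem_spectrum hμ).exists_hasEigenvector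
  have hfx : f.HasEigenvector μ x :=
    ⟨mem_eigenspace_iff.mpr (congrArg Subtype.val hx.apply_eq_smul), Subtype.coe_ne_coe.mpr hx.2⟩
  exact (hasEigenvalue_of_hasEigenvector hfx).mem_spectrum

theorem spectrum_mapQ_subset (hp : p ≤ p.comap f) :
    spectrum K (p.mapQ p f hp) ⊆ spectrum K f := fun μ => by
  simp only [← range_sub_algebraMap_ne_top_iff_mem_spectrum]
  refine mt fun hsurj => range_eq_top.mpr fun y => ?_
  obtain ⟨y, rfl⟩ := p.mkQ_surjective y
  obtain ⟨x, rfl⟩ := range_eq_top.mp hsurj y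
  exact ⟨p.mkQ x, by simp⟩

variable [IsAlgClosed K]

theorem not_disjoint_spectrum_of_le_ker_sub (hpf : p ∈ f.invtSubmodule) (hp : p ≠ ⊥)
    (hker : p ≤ ker (f - g)) : ¬ Disjoint (spectrum K f) (spectrum K g) := by
  have hpg := (mem_invtSubmodule_iff_of_le_ker_sub hker).mp hpf
  have hfg : f.restrict hpf = g.restrict hpg :=
    LinearMap.ext fun x => Subtype.ext (sub_eq_zero.mp (hker x.2))
  have := Submodule.nontrivial_iff_ne_bot.mpr hp
  obtain ⟨μ, hμ⟩ := spectrum.nonempty_of_isAlgClosed_of_finiteDimensional K (f.restrict hpf)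
  exact Set.not_disjoint_iff.mpr
    ⟨μ, spectrum_restrict_subset hpf hμ, spectrum_restrict_subset hpg (hfg ▸ hμ)⟩

theorem not_disjoint_spectrum_of_range_sub_le (hpf : p ∈ f.invtSubmodule) (hp : p ≠ ⊤)
    (hrange : range (f - g) ≤ p) : ¬ Disjoint (spectrum K f) (spectrum K g) := by
  have hpg := (mem_invtSubmodule_iff_of_range_sub_le hrange).mp hpf
  have hfg : p.mapQ p f hpf = p.mapQ p g hpg :=
    Submodule.linearMap_qext p <| LinearMap.ext fun x =>
      (Submodule.Quotient.eq p).mpr (hrange (mem_range_self (f - g) x))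
  have := Submodule.Quotient.nontrivial_iff.mpr hp
  obtain ⟨μ, hμ⟩ := spectrum.nonempty_of_isAlgClosed_of_finiteDimensional K (p.mapQ p f hpf)
  exact Set.not_disjoint_iff.mpr
    ⟨μ, spectrum_mapQ_subset hpf hμ, spectrum_mapQ_subset hpg (hfg ▸ hμ)⟩

end Spectrum

theorem finrank_lt_finrank_iff_ne_top {K V : Type*} [DivisionRing K] [AddCommGroup V] [Module K V]
    [FiniteDimensional K V] {p : Submodule K V} : finrank K p < finrank K V ↔ p ≠ ⊤ :=
  ⟨fun hlt htop => hlt.ne (htop ▸ finrank_top K V), Submodule.finrank_lt⟩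

theorem rank_mul_inv_sub_one {ι R : Type*} [Fintype ι] [DecidableEq ι] [CommRing R]
    (A : Matrix ι ι R) {B : Matrix ι ι R} (hB : IsUnit B.det) :
    (A * B⁻¹ - 1).rank = (A - B).rank := by
  rw [← Matrix.rank_mul_eq_left_of_isUnit_det B (A * B⁻¹ - 1) hB, sub_mul, one_mul,
    Matrix.nonsing_inv_mul_cancel_right B A hB]

section Matrix

variable {n : ℕ} {A B : Matrix (Fin n) (Fin n) ℂ}

theorem IsPseudoReflection.finrank_range_toLin'_sub (hB : IsUnit B.det)
    (h : IsPseudoReflection (A * B⁻¹)) :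
    finrank ℂ (range (A.toLin' - B.toLin')) = 1 := by
  rw [← map_sub]
  exact (rank_mul_inv_sub_one A hB).symm.trans h

theorem hasEigen_iff_mem_spectrum {μ : ℂ} : HasEigen A μ ↔ μ ∈ spectrum ℂ A.toLin' := by
  rw [← hasEigenvalue_iff_mem_spectrum]
  constructor
  · rintro ⟨v, hv, hAv⟩
    exact hasEigenvalue_of_hasEigenvector ⟨mem_eigenspace_iff.mpr hAv, hv⟩
  · intro hμ
    obtain ⟨v, hv⟩ := hμ.exists_hasEigenvector
    exact ⟨v, hv.2, hv.apply_eq_smul⟩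

theorem exists_proper_mulVec_invariant_iff :
    (∃ W : Submodule ℂ (Fin n → ℂ), 0 < finrank ℂ W ∧ finrank ℂ W < n ∧
        (∀ w ∈ W, A.mulVec w ∈ W) ∧ (∀ w ∈ W, B.mulVec w ∈ W)) ↔
      ∃ W ∈ invtSubmodule A.toLin' ⊓ invtSubmodule B.toLin', W ≠ ⊥ ∧ W ≠ ⊤ := by
  refine exists_congr fun W => ?_
  have hbot : 0 < finrank ℂ W ↔ W ≠ ⊥ := Submodule.one_le_finrank_iff
  have htop : finrank ℂ W < n ↔ W ≠ ⊤ := by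
    rw [← finrank_lt_finrank_iff_ne_top, finrank_fin_fun]
  rw [hbot, htop]
  exact ⟨fun ⟨h0, h1, hA, hB⟩ => ⟨⟨hA, hB⟩, h0, h1⟩,
    fun ⟨⟨hA, hB⟩, h0, h1⟩ => ⟨h0, h1, hA, hB⟩⟩

end Matrix

theorem levelt_stmt10_general {K V : Type*} [Field K] [IsAlgClosed K] [AddCommGroup V] [Module K V]
    [FiniteDimensional K V] {f g : End K V} (hfg : finrank K (range (f - g)) = 1) :
    (¬ ∃ W ∈ f.invtSubmodule ⊓ g.invtSubmodule, W ≠ ⊥ ∧ W ≠ ⊤) ↔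
      Disjoint (spectrum K f) (spectrum K g) := by
  have hatom : IsAtom (range (f - g)) := Submodule.isAtom_iff_finrank_eq_one.mpr hfg
  rw [not_iff_comm]
  constructor
  · intro hdisj
    obtain ⟨μ, hf, hg⟩ := Set.not_disjoint_iff.mp hdisj
    exact exists_mem_invtSubmodule_of_hasEigenvalue hatom
      (range_sub_algebraMap_ne_top_iff_mem_spectrum.mpr hf) (.of_mem_spectrum hg)
  · rintro ⟨W, ⟨hWf, hWg⟩, hbot, htop⟩
    have hW : W ≤ W.comap (f - g) := fun x hx => W.sub_mem (hWf hx) (hWg hx)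
    rcases le_ker_or_range_le_of_isAtom_range hatom hW with hker | hrange
    · exact not_disjoint_spectrum_of_le_ker_sub hWf hbot hker
    · exact not_disjoint_spectrum_of_range_sub_le hWf htop hrange

/-- Beukers, Théorème 1.2.1. Let `A, B ∈ GLₙ(ℂ)` (`n ≥ 2`) with `A B⁻¹`
a pseudo-reflection. Then `⟨A, B⟩` acts irreducibly on `ℂⁿ` (no nontrivial proper invariant
subspace) iff `A` and `B` have no common eigenvalue. -/
theorem levelt_stmt10 (n : ℕ) (hn : 2 ≤ n) (A B : Matrix (Fin n) (Fin n) ℂ)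
    (hA : IsUnit A.det) (hB : IsUnit B.det)
    (hpr : IsPseudoReflection (A * B⁻¹)) :
    (¬ ∃ W : Submodule ℂ (Fin n → ℂ), 0 < Module.finrank ℂ W ∧ Module.finrank ℂ W < n ∧
        (∀ w ∈ W, A.mulVec w ∈ W) ∧ (∀ w ∈ W, B.mulVec w ∈ W))
      ↔ ¬ ∃ μ : ℂ, HasEigen A μ ∧ HasEigen B μ := by
  simp only [exists_proper_mulVec_invariant_iff, hasEigen_iff_mem_spectrum,
    ← Set.not_disjoint_iff, not_not]
  exact levelt_stmt10_general (hpr.finrank_range_toLin'_sub hB)
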